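/- Büchi complementation: for every Büchi automaton A over a finite alphabet Σ there exists a Büchi automaton A' over Σ such that for every sequence σ : ℕ → Σ, A' accepts σ if and only if A does not accept σ. -/

import Mathlib

/-!
Büchi's argument. The profile of a finite word `w` records, for all states `p` and `q`, whether
`w` can lead from `p` to `q` with, and without, visiting an accepting state. There are finitely
many profiles, and the profile of `w ++ [a]` is determined by that of `w` and by `a`. By Ramsey's
theorem every sequence `σ` factors into blocks of profiles `V, W, W, W, …`; whether the automaton
accepts `σ` depends only on `V` and `W`. The complement automaton guesses such a factorization for
a pair `(V, W)` that does not lead to acceptance, and verifies the guess block by block.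
-/

namespace Buechi

/-- Nonempty finite strings over `α`, given as a head together with a tail. -/
abbrev NStr (α : Type*) : Type _ := α × List α

/-- The list of symbols of a nonempty string. -/
def NStr.toList {α : Type*} (s : NStr α) : List α := s.1 :: s.2

/-- Büchi automata over alphabet `α`: a finite type of states, a transition
relation, initial states and accepting states. -/
structure BA (α : Type*) where
  Q : Type
  fin : Fintype Q
  trans : Q → α → Q → Prop
  init : Q → Prop
  accept : Q → Prop

/-- Büchi acceptance: there is a run starting in an initial state, respecting the
transition relation, and visiting accepting states infinitely often. -/
def BA.Accepts {α : Type*} (M : BA α) (σ : ℕ → α) : Prop :=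
  ∃ ρ : ℕ → M.Q, M.init (ρ 0) ∧ (∀ n, M.trans (ρ n) (σ n) (ρ (n + 1))) ∧
    ∀ k, ∃ n, k ≤ n ∧ M.accept (ρ n)

theorem exists_mem_Ioc_succ_iff {p : ℕ → Prop} {i j : ℕ} (hij : i ≤ j) :
    (∃ m ∈ Set.Ioc i (j + 1), p m) ↔ (∃ m ∈ Set.Ioc i j, p m) ∨ p (j + 1) := by
  rw [← Order.succ_eq_add_one, ← Set.insert_Ioc_right_eq_Ioc_succ hij]
  simp [or_comm]

section Blocks

variable {c : ℕ → ℕ}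

theorem exists_mem_block (hc : StrictMono c) {n : ℕ} (hn : c 0 ≤ n) :
    ∃ k, n ∈ Set.Ico (c k) (c (k + 1)) := by
  have hcover := iUnion_Ico_map_succ_eq_Ici (fun k => hc.monotone k.zero_le)
    (Set.infinite_range_of_injective hc.injective).not_bddAbove
  exact Set.mem_iUnion.1 (hcover.symm ▸ hn : n ∈ ⋃ k, Set.Ico (c k) (c (Order.succ k)))

theorem block_index_unique (hc : StrictMono c) {n k l : ℕ}
    (hk : n ∈ Set.Ico (c k) (c (k + 1))) (hl : n ∈ Set.Ico (c l) (c (l + 1))) : k = l := by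
  have hkl := hc.lt_iff_lt.1 (hk.1.trans_lt hl.2)
  have hlk := hc.lt_iff_lt.1 (hl.1.trans_lt hk.2)
  omega

theorem exists_eq_on_blocks {X : Type*} (hc : StrictMono c) (r : ℕ → ℕ → X) :
    ∃ ρ : ℕ → X, ∀ k, ∀ m ∈ Set.Ico (c k) (c (k + 1)), ρ m = r k m := by
  choose! b hb using fun n => exists_mem_block hc (n := n)
  refine ⟨fun m => r (b m) m, fun k m hm => ?_⟩
  have hm0 : c 0 ≤ m := (hc.monotone k.zero_le).trans hm.1
  simp only [block_index_unique hc (hb m hm0) hm]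

end Blocks

section Ramsey

theorem exists_monochromatic_subsequence {C : Type*} [Finite C] (f : ℕ → ℕ → C) :
    ∃ (W : C) (d : ℕ → ℕ), StrictMono d ∧ ∀ m n, m < n → f (d m) (d n) = W := by
  have exists_limit (g : ℕ → C) : ∃ w, ∀ᶠ j in Filter.hyperfilter ℕ, g j = w :=
    Ultrafilter.eventually_exists_iff.1 (.of_forall fun j => ⟨g j, rfl⟩)
  choose F hF using fun i => exists_limit (f i)
  obtain ⟨W, hW⟩ := exists_limit F
  have exists_later (s : Finset ℕ) (hs : ∀ i ∈ s, F i = W) :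
      ∃ j, F j = W ∧ ∀ i ∈ s, i < j ∧ f i j = W := by
    refine (hW.and ((Filter.eventually_all_finset s).2 fun i hi => ?_)).exists
    have hgt : ∀ᶠ j in Filter.hyperfilter ℕ, i < j :=
      Nat.hyperfilter_le_atTop (Filter.eventually_gt_atTop i)
    filter_upwards [hgt, hF i] with j hij hfij
    exact ⟨hij, hfij.trans (hs i hi)⟩
  obtain ⟨d, -, hd⟩ := exists_seq_of_forall_finset_exists _ _ exists_later
  exact ⟨W, d, fun m n hmn => (hd m n hmn).1, fun m n hmn => (hd m n hmn).2⟩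

/-- The sequence `V, W, W, W, …`. -/
def lasso {C : Type*} (V W : C) : ℕ → C
  | 0 => V
  | _ + 1 => W

theorem exists_lasso_factorization {C : Type*} [Finite C] (f : ℕ → ℕ → C) :
    ∃ (V W : C) (c : ℕ → ℕ), StrictMono c ∧ c 0 = 0 ∧
      ∀ k, f (c k) (c (k + 1)) = lasso V W k := by
  obtain ⟨W, d, hd, hfd⟩ := exists_monochromatic_subsequence f
  let c : ℕ → ℕ := fun k => if k = 0 then 0 else d k
  have hc : StrictMono c := strictMono_nat_of_lt_succ fun k => by
    have hk : d k < d (k + 1) := hd k.lt_succ_self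
    grind
  refine ⟨f 0 (d 1), W, c, hc, rfl, ?_⟩
  rintro (_ | k)
  · rfl
  · exact hfd (k + 1) (k + 2) (Nat.lt_succ_self _)

end Ramsey

section Automata

variable {α : Type*}

/-- The factor `[σ i, …, σ (j - 1)]` of the sequence `σ`, empty if `j ≤ i`. -/
def factor (σ : ℕ → α) (i j : ℕ) : List α := (List.Ico i j).map σ

@[simp]
theorem factor_self (σ : ℕ → α) (i : ℕ) : factor σ i i = [] := by
  simp [factor]

theorem factor_succ (σ : ℕ → α) {i j : ℕ} (hij : i ≤ j) :
    factor σ i (j + 1) = factor σ i j ++ [σ j] := by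
  simp [factor, List.Ico.succ_top hij]

section CutAutomaton

/-- States of `cutAutomaton`: the value required of the current block, the value required of every
later block, the value of the part of the current block read so far, and whether a block has just
been started. -/
structure CutState (C : Type) where
  target : C
  period : C
  current : C
  atCut : Bool

instance CutState.finite (C : Type) [Finite C] : Finite (CutState C) :=
  Finite.of_injective (fun s => (s.target, s.period, s.current, s.atCut)) fun s t h => by
    cases s; cases t; simpa using h

/-- Transitions of `cutAutomaton`: read a letter within the current block, or read its last letter,
which is allowed only if the block then has the required value. -/
inductive CutTrans {C : Type} (step : C → α → C) (start : C) : CutState C → α → CutState C → Prop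
  | extend (V W c : C) (b : Bool) (a : α) :
      CutTrans step start ⟨V, W, c, b⟩ a ⟨V, W, step c a, false⟩
  | cut (V W c : C) (b : Bool) (a : α) (h : step c a = V) :
      CutTrans step start ⟨V, W, c, b⟩ a ⟨W, W, start, true⟩

/-- Give a finite word `w` the value `w.foldl step start`. This automaton guesses a pair `(V, W)`
in `S` and accepts the sequences that factor into nonempty blocks of values `V, W, W, W, …`. -/
noncomputable def cutAutomaton {C : Type} [Finite C] (step : C → α → C) (start : C)
    (S : C → C → Prop) : BA α where
  Q := CutState C
  fin := Fintype.ofFinite _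
  trans := CutTrans step start
  init s := ∃ V W, S V W ∧ s = ⟨V, W, start, true⟩
  accept s := s.atCut = true

variable {C : Type} {step : C → α → C} {start : C} {σ : ℕ → α} {V W : C}

theorem CutTrans.run_within_block {ρ : ℕ → CutState C}
    (hρ : ∀ n, CutTrans step start (ρ n) (σ n) (ρ (n + 1))) {i j : ℕ}
    (hi : ρ i = ⟨V, W, start, true⟩) (hno_cut : ∀ m, i < m → m < j → ¬(ρ m).atCut = true)
    {m : ℕ} (him : i ≤ m) (hmj : m < j) :
    ∃ b, ρ m = ⟨V, W, (factor σ i m).foldl step start, b⟩ := by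
  induction m, him using Nat.le_induction with
  | base => exact ⟨true, by simp [hi]⟩
  | succ m him ih =>
    obtain ⟨b, hm⟩ := ih (by omega)
    have hstep := hρ m
    have hnot := hno_cut (m + 1) (by omega) hmj
    rw [hm] at hstep
    generalize ρ (m + 1) = s at hstep hnot ⊢
    cases hstep with
    | extend => exact ⟨false, by simp [factor_succ σ him]⟩
    | cut => exact (hnot rfl).elim

theorem CutTrans.run_to_next_cut {ρ : ℕ → CutState C}
    (hρ : ∀ n, CutTrans step start (ρ n) (σ n) (ρ (n + 1))) {i j : ℕ} (hij : i < j)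
    (hi : ρ i = ⟨V, W, start, true⟩) (hj : (ρ j).atCut = true)
    (hno_cut : ∀ m, i < m → m < j → ¬(ρ m).atCut = true) :
    (factor σ i j).foldl step start = V ∧ ρ j = ⟨W, W, start, true⟩ := by
  obtain ⟨m, rfl⟩ : ∃ m, j = m + 1 := ⟨j - 1, by omega⟩
  have him : i ≤ m := by omega
  obtain ⟨b, hm⟩ := CutTrans.run_within_block hρ hi hno_cut him m.lt_succ_self
  have hstep := hρ m
  rw [hm] at hstep
  generalize ρ (m + 1) = s at hstep hj ⊢
  cases hstep with
  | extend => cases hj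
  | cut _ _ _ _ _ h => exact ⟨by simpa [factor_succ σ him] using h, rfl⟩

theorem CutTrans.exists_factorization {ρ : ℕ → CutState C}
    (hρ : ∀ n, CutTrans step start (ρ n) (σ n) (ρ (n + 1))) (h0 : ρ 0 = ⟨V, W, start, true⟩)
    (hcuts : ∀ k, ∃ n, k ≤ n ∧ (ρ n).atCut = true) :
    ∃ c : ℕ → ℕ, StrictMono c ∧ c 0 = 0 ∧
      ∀ k, (factor σ (c k) (c (k + 1))).foldl step start = lasso V W k := by
  have hinf : {n | (ρ n).atCut = true}.Infinite :=
    Nat.frequently_atTop_iff_infinite.1 (Filter.frequently_atTop.2 hcuts)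
  let c := Nat.nth fun n => (ρ n).atCut = true
  have hc : StrictMono c := Nat.nth_strictMono hinf
  have hc0 : c 0 = 0 := Nat.nth_zero_of_zero (by rw [h0])
  have next_cut {k : ℕ} {U : C} (hk : ρ (c k) = ⟨U, W, start, true⟩) :
      (factor σ (c k) (c (k + 1))).foldl step start = U ∧
        ρ (c (k + 1)) = ⟨W, W, start, true⟩ :=
    CutTrans.run_to_next_cut hρ (hc k.lt_succ_self) hk (Nat.nth_mem_of_infinite hinf _)
      fun m hkm hmk hm => hkm.not_ge (Nat.le_nth_of_lt_nth_succ hmk hm)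
  have state_at_cut (k : ℕ) : ρ (c k) = ⟨lasso V W k, W, start, true⟩ := by
    induction k with
    | zero => rw [hc0, h0, lasso]
    | succ k ih => exact (next_cut ih).2
  exact ⟨c, hc, hc0, fun k => (next_cut (state_at_cut k)).1⟩

theorem CutTrans.exists_run {c : ℕ → ℕ} (hc : StrictMono c) (hc0 : c 0 = 0)
    (hV : ∀ k, (factor σ (c k) (c (k + 1))).foldl step start = lasso V W k) :
    ∃ ρ : ℕ → CutState C, (∀ n, CutTrans step start (ρ n) (σ n) (ρ (n + 1))) ∧
      ∀ k, ρ (c k) = ⟨lasso V W k, W, start, true⟩ := by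
  obtain ⟨ρ, hρ⟩ := exists_eq_on_blocks hc fun k m =>
    (⟨lasso V W k, W, (factor σ (c k) m).foldl step start, decide (m = c k)⟩ : CutState C)
  have state_at_cut (k : ℕ) : ρ (c k) = ⟨lasso V W k, W, start, true⟩ := by
    simp [hρ k (c k) ⟨le_rfl, hc k.lt_succ_self⟩]
  refine ⟨ρ, fun n => ?_, state_at_cut⟩
  obtain ⟨k, hkn, hnk⟩ := exists_mem_block hc (hc0.trans_le n.zero_le)
  rw [hρ k n ⟨hkn, hnk⟩]
  rcases (Nat.succ_le_of_lt hnk).lt_or_eq with hlt | heq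
  · have hne : n + 1 ≠ c k := by omega
    rw [hρ k (n + 1) ⟨by omega, hlt⟩, factor_succ σ hkn, List.foldl_concat, decide_eq_false hne]
    exact .extend ..
  · rw [show n + 1 = c (k + 1) from heq, state_at_cut]
    refine .cut _ _ _ _ _ ?_
    rw [← hV, ← heq, Nat.succ_eq_add_one, factor_succ σ hkn, List.foldl_concat]

theorem cutAutomaton_accepts_iff [Finite C] {S : C → C → Prop} :
    (cutAutomaton step start S).Accepts σ ↔
      ∃ V W, S V W ∧ ∃ c : ℕ → ℕ, StrictMono c ∧ c 0 = 0 ∧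
        ∀ k, (factor σ (c k) (c (k + 1))).foldl step start = lasso V W k := by
  constructor
  · rintro ⟨ρ, ⟨V, W, hS, h0⟩, hρ, hcuts⟩
    exact ⟨V, W, hS, CutTrans.exists_factorization hρ h0 hcuts⟩
  · rintro ⟨V, W, hS, c, hc, hc0, hV⟩
    obtain ⟨ρ, hρ, state_at_cut⟩ := CutTrans.exists_run hc hc0 hV
    refine ⟨ρ, ⟨V, W, hS, ?_⟩, hρ, fun k => ⟨c k, hc.le_apply, ?_⟩⟩
    · simpa only [hc0, lasso] using state_at_cut 0
    · exact congrArg CutState.atCut (state_at_cut k)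

end CutAutomaton

section Profiles

/-- Profiles of finite words over the state type `Q`: a profile relates `p` to `q` with flag `b` if
some path from `p` to `q` visits an accepting state after `p` exactly when `b = true`. The first
state is not counted because it is the last state of the preceding block. -/
abbrev Profile (Q : Type) : Type := Q → Q → Bool → Prop

/-- The profile of the empty word. -/
def emptyProfile (Q : Type) : Profile Q := fun p q b => p = q ∧ b = false

/-- The profile of `w ++ [a]`, computed from the profile `P` of `w`. -/
def BA.profileStep (A : BA α) (P : Profile A.Q) (a : α) : Profile A.Q :=
  fun p q b => ∃ r b', P p r b' ∧ A.trans r a q ∧ (b = true ↔ b' = true ∨ A.accept q)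

/-- The profile of a finite word. -/
def BA.profile (A : BA α) (w : List α) : Profile A.Q := w.foldl A.profileStep (emptyProfile A.Q)

/-- Acceptance of a sequence of profiles, one for each block of a factorization: `q k` is the state
at the start of block `k`, and `b k` tells whether that block visits an accepting state. -/
def BA.AcceptsProfiles (A : BA α) (P : ℕ → Profile A.Q) : Prop :=
  ∃ (q : ℕ → A.Q) (b : ℕ → Bool), A.init (q 0) ∧ (∀ k, P k (q k) (q (k + 1)) (b k)) ∧
    ∀ k, ∃ n, k ≤ n ∧ b n = true

variable (A : BA α) (σ : ℕ → α)

theorem BA.profile_factor_of_path {ρ : ℕ → A.Q} {i j : ℕ} (hij : i ≤ j)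
    (hρ : ∀ m ∈ Set.Ico i j, A.trans (ρ m) (σ m) (ρ (m + 1))) {b : Bool}
    (hb : b = true ↔ ∃ m ∈ Set.Ioc i j, A.accept (ρ m)) :
    A.profile (factor σ i j) (ρ i) (ρ j) b := by
  classical
  induction j, hij using Nat.le_induction generalizing b with
  | base => simpa [profile, emptyProfile] using hb
  | succ j hij ih =>
    have hprev := ih (fun m hm => hρ m ⟨hm.1, hm.2.trans j.lt_succ_self⟩) decide_eq_true_iff
    rw [profile, factor_succ σ hij, List.foldl_concat]
    refine ⟨ρ j, _, hprev, hρ j ⟨hij, j.lt_succ_self⟩, ?_⟩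
    rw [hb, decide_eq_true_iff, exists_mem_Ioc_succ_iff hij]

theorem BA.exists_path_of_profile_factor {i j : ℕ} (hij : i ≤ j) {p q : A.Q} {b : Bool}
    (h : A.profile (factor σ i j) p q b) :
    ∃ ρ : ℕ → A.Q, ρ i = p ∧ ρ j = q ∧ (∀ m ∈ Set.Ico i j, A.trans (ρ m) (σ m) (ρ (m + 1))) ∧
      (b = true ↔ ∃ m ∈ Set.Ioc i j, A.accept (ρ m)) := by
  induction j, hij using Nat.le_induction generalizing q b with
  | base =>
    obtain ⟨rfl, rfl⟩ : p = q ∧ b = false := by simpa [profile, emptyProfile] using h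
    exact ⟨fun _ => p, by simp⟩
  | succ j hij ih =>
    rw [profile, factor_succ σ hij, List.foldl_concat] at h
    obtain ⟨r, b', hprofile, htrans, hb⟩ := h
    obtain ⟨ρ, hρi, hρj, hρ, hb'⟩ := ih hprofile
    have hρ' {m : ℕ} (hm : m ≤ j) : Function.update ρ (j + 1) q m = ρ m :=
      Function.update_of_ne (by omega) ..
    refine ⟨Function.update ρ (j + 1) q, (hρ' hij).trans hρi, Function.update_self .., ?_, ?_⟩
    · rintro m ⟨him, hmj⟩
      rcases (Nat.le_of_lt_succ hmj).lt_or_eq with hlt | rfl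
      · rw [hρ' hlt.le, hρ' hlt]
        exact hρ m ⟨him, hlt⟩
      · rwa [hρ' le_rfl, Function.update_self, hρj]
    · rw [hb, hb', exists_mem_Ioc_succ_iff hij, Function.update_self]
      exact or_congr_left (exists_congr fun m => and_congr_right fun hm => by rw [hρ' hm.2])

variable {A σ} {c : ℕ → ℕ}

theorem BA.Accepts.acceptsProfiles (hA : A.Accepts σ) (hc : StrictMono c) (hc0 : c 0 = 0) :
    A.AcceptsProfiles fun k => A.profile (factor σ (c k) (c (k + 1))) := by
  classical
  obtain ⟨ρ, hinit, hρ, haccept⟩ := hA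
  refine ⟨fun k => ρ (c k),
    fun k => decide (∃ m ∈ Set.Ioc (c k) (c (k + 1)), A.accept (ρ m)),
    by simpa only [hc0] using hinit,
    fun k => A.profile_factor_of_path σ (hc.monotone k.le_succ) (fun m _ => hρ m)
      decide_eq_true_iff, fun k => ?_⟩
  obtain ⟨n, hkn, hn⟩ := haccept (c k + 1)
  obtain ⟨l, hln, hnl⟩ := exists_mem_block hc (n := n - 1) (by omega)
  have hkl : k < l + 1 := hc.lt_iff_lt.1 (by omega)
  exact ⟨l, Nat.le_of_lt_succ hkl, decide_eq_true ⟨n, ⟨by omega, by omega⟩, hn⟩⟩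

theorem BA.AcceptsProfiles.accepts
    (h : A.AcceptsProfiles fun k => A.profile (factor σ (c k) (c (k + 1))))
    (hc : StrictMono c) (hc0 : c 0 = 0) : A.Accepts σ := by
  obtain ⟨q, b, hinit, hprofile, hflag⟩ := h
  have hlt (k : ℕ) : c k < c (k + 1) := hc k.lt_succ_self
  choose r hr_left hr_right hr_trans hr_accept using fun k =>
    A.exists_path_of_profile_factor σ (hlt k).le (hprofile k)
  obtain ⟨ρ, hρ⟩ := exists_eq_on_blocks hc r
  have hρ_cut (k : ℕ) : ρ (c k) = q k := (hρ k _ ⟨le_rfl, hlt k⟩).trans (hr_left k)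
  have hρ_closed (k m : ℕ) (hm : m ∈ Set.Icc (c k) (c (k + 1))) : ρ m = r k m := by
    rcases hm.2.lt_or_eq with hlt | rfl
    · exact hρ k m ⟨hm.1, hlt⟩
    · rw [hρ_cut, hr_right]
  refine ⟨ρ, by rwa [← hc0, hρ_cut], fun n => ?_, fun k => ?_⟩
  · obtain ⟨k, hkn, hnk⟩ := exists_mem_block hc (hc0.trans_le n.zero_le)
    rw [hρ_closed k n ⟨hkn, hnk.le⟩, hρ_closed k (n + 1) ⟨by omega, hnk⟩]
    exact hr_trans k n ⟨hkn, hnk⟩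
  · obtain ⟨l, hkl, hl⟩ := hflag k
    obtain ⟨m, hm, hacc⟩ := (hr_accept l).1 hl
    have hlm : l ≤ m := hc.le_apply.trans hm.1.le
    exact ⟨m, hkl.trans hlm, by rwa [hρ_closed l m ⟨hm.1.le, hm.2⟩]⟩

theorem BA.accepts_iff_acceptsProfiles (hc : StrictMono c) (hc0 : c 0 = 0) :
    A.Accepts σ ↔ A.AcceptsProfiles fun k => A.profile (factor σ (c k) (c (k + 1))) :=
  ⟨fun h => h.acceptsProfiles hc hc0, fun h => h.accepts hc hc0⟩

end Profiles

theorem complement_automaton_exists_general (A : BA α) :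
    ∃ A' : BA α, ∀ σ : ℕ → α, A'.Accepts σ ↔ ¬ A.Accepts σ := by
  have := A.fin
  refine ⟨cutAutomaton A.profileStep (emptyProfile A.Q)
    fun V W => ¬ A.AcceptsProfiles (lasso V W), fun σ => ?_⟩
  have accepts_iff_lasso {c V W} (hc : StrictMono c) (hc0 : c 0 = 0)
      (hV : ∀ k, A.profile (factor σ (c k) (c (k + 1))) = lasso V W k) :
      A.Accepts σ ↔ A.AcceptsProfiles (lasso V W) := by
    rw [BA.accepts_iff_acceptsProfiles hc hc0, funext hV]
  rw [cutAutomaton_accepts_iff]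
  constructor
  · rintro ⟨V, W, hrejects, c, hc, hc0, hV⟩
    rwa [accepts_iff_lasso hc hc0 hV]
  · intro hrejects
    obtain ⟨V, W, c, hc, hc0, hV⟩ :=
      exists_lasso_factorization fun i j => A.profile (factor σ i j)
    exact ⟨V, W, by rwa [← accepts_iff_lasso hc hc0 hV], c, hc, hc0, hV⟩

end Automata

/-- Büchi complementation: every Büchi automaton has a complement automaton. -/
theorem complement_automaton_exists {α : Type*} [Fintype α] (A : BA α) :
    ∃ A' : BA α, ∀ σ : ℕ → α, A'.Accepts σ ↔ ¬ A.Accepts σ :=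
  complement_automaton_exists_general A

end Buechi
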